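/- Let F = {f₁,…,fₙ} ⊂ ℂ[x₁,…,xₙ] be a polynomial system with an isolated singular zero p ∈ ℂⁿ, and assume rank(J(f₁,…,f_s)(p)) = rank(J(F)(p)) = s. For new variables α = (α₁,…,α_s), define h_j = α₁ ∂f₁/∂x_j + ⋯ + α_s ∂f_s/∂x_j + ∂f_{s+1}/∂x_j for j = 1,…,n, let G = {f₁,…,fₙ, h₁,…,hₙ} ⊂ ℂ[x,α], and let α̂ ∈ ℂ^s be the unique point with G(p,α̂) = 0. Then the multiplicity of (p,α̂) as an isolated zero of G = 0 in ℂ^{n+s} is strictly smaller than the multiplicity of p as an isolated zero of F = 0 in ℂⁿ. -/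

import Mathlib

open MvPolynomial

/-- The rank over ℂ of the Jacobian matrix of a finite polynomial system, evaluated at `p`. -/
noncomputable def jacRank {n : ℕ} {ι : Type*} [Fintype ι]
    (g : ι → MvPolynomial (Fin n) ℂ) (p : Fin n → ℂ) : ℕ :=
  (Matrix.of fun (i : ι) (j : Fin n) => eval p (pderiv j (g i))).rank

/-- The image in `ℂ[x]/⟨H⟩` of the maximal ideal `⟨x₁ − p₁,…,xₙ − pₙ⟩` of the point `p`. -/
noncomputable def maxIdealAt {n : ℕ} (H : Set (MvPolynomial (Fin n) ℂ)) (p : Fin n → ℂ) :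
    Ideal (MvPolynomial (Fin n) ℂ ⧸ Ideal.span H) :=
  Ideal.map (Ideal.Quotient.mk (Ideal.span H))
    (Ideal.span (Set.range fun i : Fin n => X i - C (p i)))

open Classical in
/-- The multiplicity of `p` as a zero of the polynomial system `H`: the ℂ-vector-space
dimension of the localization of `ℂ[x₁,…,xₙ]/⟨H⟩` at the maximal ideal
`⟨x₁ − p₁,…,xₙ − pₙ⟩` (and `0` in the degenerate case where this ideal is not prime,
which cannot happen when `p` is an isolated zero of `H`). -/
noncomputable def zeroMultiplicity {n : ℕ} (H : Set (MvPolynomial (Fin n) ℂ))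
    (p : Fin n → ℂ) : ℕ :=
  if h : (maxIdealAt H p).IsPrime then
    haveI := h
    Module.finrank ℂ (Localization.AtPrime (maxIdealAt H p))
  else 0


/-- The polynomial `fᵢ ∈ ℂ[x₁,…,xₙ]` viewed inside `ℂ[x₁,…,xₙ,α₁,…,α_s]`, the variables
`x₁,…,xₙ` being the first `n` variables. -/
noncomputable def embX {n : ℕ} (s : ℕ) (g : MvPolynomial (Fin n) ℂ) :
    MvPolynomial (Fin (n + s)) ℂ :=
  rename (Fin.castAdd s) g

/-- The auxiliary polynomial
`h_j = α₁ ∂f₁/∂x_j + ⋯ + α_s ∂f_s/∂x_j + ∂f_{s+1}/∂x_j ∈ ℂ[x,α]`,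
where `α_i` is the `(n+i)`-th variable of `ℂ[x₁,…,xₙ,α₁,…,α_s]`. -/
noncomputable def hPoly {n s : ℕ} (hs : s < n) (f : Fin n → MvPolynomial (Fin n) ℂ)
    (j : Fin n) : MvPolynomial (Fin (n + s)) ℂ :=
  (∑ i : Fin s, X (Fin.natAdd n i) * embX s (pderiv j (f (Fin.castLE hs.le i)))) +
    embX s (pderiv j (f ⟨s, hs⟩))

theorem aux_series {V : Type*} [CommRing V] [IsDomain V] [Algebra ℂ V] (c : V →ₐ[ℂ] ℂ) (w : V)
    (hw : w ≠ 0) (hker : RingHom.ker c = Ideal.span {w}) :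
    ∃ φ : V →ₐ[ℂ] PowerSeries ℂ, (∀ v, PowerSeries.constantCoeff (φ v) = c v) ∧
      φ w ≠ 0 := by
  have h1 : ∀ v : V, ∃ v', v = algebraMap ℂ V (c v) + w * v' := by
    intro v
    have : v - algebraMap ℂ V (c v) ∈ RingHom.ker c := by
      simp [RingHom.mem_ker]
    rw [hker, Ideal.mem_span_singleton] at this
    obtain ⟨v', h⟩ := this
    exact ⟨v', by rw [← h]; ring⟩
  choose D hD using h1
  have hcw : c w = 0 := by
    have : w ∈ RingHom.ker c := hker ▸ Ideal.mem_span_singleton_self w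
    simpa [RingHom.mem_ker] using this
  have huniq : ∀ v k v', v = algebraMap ℂ V k + w * v' → D v = v' := by
    intro v k v' h
    have h2 : c v = k := by rw [h]; simp [hcw]
    have h3 := hD v
    rw [h2] at h3
    exact mul_left_cancel₀ hw (add_left_cancel (h3.symm.trans h))
  have hadd : ∀ u v, D (u + v) = D u + D v := by
    intro u v
    apply huniq _ (c u + c v)
    conv_lhs => rw [hD u, hD v]
    rw [map_add]; ring
  have hmul : ∀ u v, D (u * v) = algebraMap ℂ V (c u) * D v + D u * v := by
    intro u v
    apply huniq _ (c u * c v)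
    conv_lhs => rw [hD u]
    have := hD v
    rw [map_mul]
    linear_combination algebraMap ℂ V (c u) * this
  have halg : ∀ k, D (algebraMap ℂ V k) = 0 := fun k => huniq _ k _ (by simp)
  have hDw : D w = 1 := huniq _ 0 _ (by simp)
  have hz : D 0 = 0 := by simpa using halg 0
  have hitz : ∀ n, D^[n] 0 = 0 := fun n => Function.iterate_fixed hz n
  have hitadd : ∀ n u v, D^[n] (u + v) = D^[n] u + D^[n] v := by
    intro n
    induction n with
    | zero => simp
    | succ n ih => intro u v; simp [Function.iterate_succ_apply, hadd, ih]
  have hsm : ∀ k v, D (algebraMap ℂ V k * v) = algebraMap ℂ V k * D v := by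
    intro k v; rw [hmul, halg]; simp
  have hitsm : ∀ n k v, D^[n] (algebraMap ℂ V k * v) = algebraMap ℂ V k * D^[n] v := by
    intro n
    induction n with
    | zero => simp
    | succ n ih => intro u v; simp [Function.iterate_succ_apply, hsm, ih]
  have hitmul : ∀ n u v, c (D^[n] (u * v)) =
      ∑ x ∈ Finset.HasAntidiagonal.antidiagonal n, c (D^[x.1] u) * c (D^[x.2] v) := by
    intro n
    induction n with
    | zero => simp
    | succ n ih =>
      intro u v
      rw [Finset.Nat.sum_antidiagonal_succ, Function.iterate_succ_apply, hmul, hitadd, map_add, hitsm,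
        map_mul, ih]
      simp [Function.iterate_succ_apply]
  have hitalg : ∀ n k, c (D^[n] (algebraMap ℂ V k)) = if n = 0 then k else 0 := by
    intro n k
    cases n with
    | zero => simp
    | succ n => simp [Function.iterate_succ_apply, halg, hitz]
  let φ : V →ₐ[ℂ] PowerSeries ℂ :=
    { toFun := fun v => PowerSeries.mk fun n => c (D^[n] v)
      map_one' := by
        ext n
        have := hitalg n 1
        rw [map_one] at this
        simp [PowerSeries.coeff_one, this]
      map_zero' := by ext n; simp [hitz]
      map_add' := by intro u v; ext n; simp [hitadd]
      map_mul' := by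
        intro u v; ext n
        simp [PowerSeries.coeff_mul, hitmul]
      commutes' := by
        intro k
        ext n
        simp [hitalg, PowerSeries.coeff_C] }
  refine ⟨φ, fun v => ?_, fun h => ?_⟩
  · simp [φ]
  · have := congrArg (PowerSeries.coeff 1) h
    simp [φ, hDw] at this

theorem height_max {n : ℕ} (p : Fin n → ℂ) :
    (n : ℕ∞) ≤ (RingHom.ker (aeval p : MvPolynomial (Fin n) ℂ →ₐ[ℂ] ℂ)).height := by
  have key : ∀ q : Fin n → ℂ, (RingHom.ker (aeval q : MvPolynomial (Fin n) ℂ →ₐ[ℂ] ℂ)).height ≤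
      (RingHom.ker (aeval p : MvPolynomial (Fin n) ℂ →ₐ[ℂ] ℂ)).height := by
    intro q
    let e : MvPolynomial (Fin n) ℂ ≃ₐ[ℂ] MvPolynomial (Fin n) ℂ :=
      AlgEquiv.ofAlgHom (aeval fun i => X i + C (p i - q i)) (aeval fun i => X i - C (p i - q i))
        (by ext i; simp) (by ext i; simp)
    rw [← RingEquiv.height_comap e.toRingEquiv]
    apply le_of_eq
    congr 1
    have : (aeval q : MvPolynomial (Fin n) ℂ →ₐ[ℂ] ℂ).comp e.toAlgHom = aeval p := by
      ext i; simp [e]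
    rw [← this]
    rfl
  have h := MvPolynomial.ringKrullDim_of_isNoetherianRing (R := ℂ) (ι := Fin n)
  have h2 : ringKrullDim (MvPolynomial (Fin n) ℂ) ≤
      ((RingHom.ker (aeval p : MvPolynomial (Fin n) ℂ →ₐ[ℂ] ℂ)).height : WithBot ℕ∞) := by
    rw [ringKrullDim_le_iff_isMaximal_height_le]
    intro M hM
    obtain ⟨q, rfl⟩ := MvPolynomial.isMaximal_iff_eq_vanishingIdeal_singleton.1 hM
    have : vanishingIdeal ℂ {q} = RingHom.ker (aeval q : MvPolynomial (Fin n) ℂ →ₐ[ℂ] ℂ) := by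
      ext; simp [RingHom.mem_ker]
    rw [this]
    exact_mod_cast key q
  rw [h] at h2
  simp at h2
  exact_mod_cast h2

theorem arc_normal {R C : Type*} [CommRing R] [IsDomain R] [Algebra ℂ R] [CommRing C] [IsDomain C]
    [IsNoetherianRing C] [IsIntegrallyClosed C] [Algebra ℂ C] [Algebra.FiniteType ℂ C]
    [Algebra R C] [IsScalarTower ℂ R C] [Algebra.IsIntegral R C]
    (inj : Function.Injective (algebraMap R C)) (c : R →ₐ[ℂ] ℂ) (hne : RingHom.ker c ≠ ⊥)
    (h1 : ∀ Q : Ideal R, Q.IsPrime → Q ≤ RingHom.ker c → Q = ⊥ ∨ Q = RingHom.ker c) :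
    ∃ φ : R →ₐ[ℂ] PowerSeries ℂ, (∀ r, PowerSeries.constantCoeff (φ r) = c r) ∧
      ∃ r, c r = 0 ∧ φ r ≠ 0 := by
  have hcs : Function.Surjective c := fun z => ⟨algebraMap ℂ R z, by simp⟩
  have hmax : (RingHom.ker c).IsMaximal := RingHom.ker_isMaximal_of_surjective c hcs
  obtain ⟨Q, hQmax, hQ⟩ := Ideal.exists_ideal_over_maximal_of_isIntegral (S := C)
    (RingHom.ker c) (by rw [(RingHom.injective_iff_ker_eq_bot _).1 inj]; exact bot_le)
  have hQp : Q.IsPrime := hQmax.isPrime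
  let _ : Field (C ⧸ Q) := Ideal.Quotient.field Q
  have hfin : Module.Finite ℂ (C ⧸ Q) := finite_of_finite_type_of_isJacobsonRing ℂ (C ⧸ Q)
  have hbij : Function.Bijective (algebraMap ℂ (C ⧸ Q)) :=
    IsAlgClosed.algebraMap_bijective_of_isIntegral
  let e : ℂ ≃ₐ[ℂ] (C ⧸ Q) := AlgEquiv.ofBijective (Algebra.ofId ℂ (C ⧸ Q)) hbij
  let c0 : C →ₐ[ℂ] ℂ := e.symm.toAlgHom.comp (Ideal.Quotient.mkₐ ℂ Q)
  have hc0 : ∀ x, c0 x = 0 ↔ x ∈ Q := by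
    intro x
    simp [c0, Ideal.Quotient.eq_zero_iff_mem]
  have hcc : ∀ r, c0 (algebraMap R C r) = c r := by
    intro r
    have : r - algebraMap ℂ R (c r) ∈ RingHom.ker c := by simp [RingHom.mem_ker]
    rw [← hQ, Ideal.mem_comap, ← hc0] at this
    rw [map_sub, map_sub, ← IsScalarTower.algebraMap_apply, AlgHom.commutes, sub_eq_zero] at this
    simpa using this
  let V := Localization.AtPrime Q
  have hinjV : Function.Injective (algebraMap C V) :=
    IsLocalization.injective V Q.primeCompl_le_nonZeroDivisors
  let cV : V →ₐ[ℂ] ℂ := IsLocalization.liftAlgHom (M := Q.primeCompl) (f := c0) (by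
    intro y
    rw [isUnit_iff_ne_zero, Ne, hc0]
    exact y.2)
  have hcV : ∀ x, cV (algebraMap C V x) = c0 x := by
    intro x; simp [cV]
  have hcVs : Function.Surjective cV := fun z => ⟨algebraMap ℂ V z, by simp⟩
  have hkerV : RingHom.ker cV = IsLocalRing.maximalIdeal V :=
    IsLocalRing.eq_maximalIdeal (RingHom.ker_isMaximal_of_surjective cV hcVs)
  obtain ⟨r0, hr0, hr0'⟩ := Submodule.exists_mem_ne_zero_of_ne_bot hne
  have hVdom : IsDomain V := IsLocalization.isDomain_localization Q.primeCompl_le_nonZeroDivisors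
  have hVnoeth : IsNoetherianRing V := IsLocalization.isNoetherianRing Q.primeCompl V inferInstance
  have hVic : IsIntegrallyClosed V :=
    isIntegrallyClosed_of_isLocalization _ Q.primeCompl Q.primeCompl_le_nonZeroDivisors
  have hprimes : ∀ P : Ideal V, P ≠ ⊥ → P.IsPrime → P = IsLocalRing.maximalIdeal V := by
    intro P hPb hP
    have hP1 : P.comap (algebraMap C V) ≠ ⊥ := by
      intro h
      apply hPb
      rw [← IsLocalization.map_under Q.primeCompl V P, Ideal.under, h, Ideal.map_bot]
    have hP1Q : P.comap (algebraMap C V) ≤ Q := by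
      have := Ideal.comap_mono (f := algebraMap C V) (IsLocalRing.le_maximalIdeal hP.ne_top)
      rwa [← Ideal.under, ← Ideal.under, IsLocalization.AtPrime.under_maximalIdeal V Q] at this
    have hP1p : (P.comap (algebraMap C V)).IsPrime := Ideal.comap_isPrime _ _
    have hP2 : (P.comap (algebraMap C V)).comap (algebraMap R C) ≠ ⊥ := fun h =>
      hP1 (Ideal.eq_bot_of_comap_eq_bot h)
    have hP2' : (P.comap (algebraMap C V)).comap (algebraMap R C) = RingHom.ker c := by
      refine (h1 _ (Ideal.comap_isPrime _ _) ?_).resolve_left hP2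
      rw [← hQ]
      exact Ideal.comap_mono hP1Q
    have hm : (P.comap (algebraMap C V)).IsMaximal :=
      Ideal.isMaximal_of_isIntegral_of_isMaximal_comap _ (hP2' ▸ hmax)
    have heq := hm.eq_of_le hQp.ne_top hP1Q
    rw [← IsLocalization.map_under Q.primeCompl V P, Ideal.under, heq]
    exact Localization.AtPrime.map_eq_maximalIdeal
  have hprin : (IsLocalRing.maximalIdeal V).IsPrincipal :=
    ((tfae_of_isNoetherianRing_of_isLocalRing_of_isDomain V).out 3 4 :
      (IsIntegrallyClosed V ∧ ∀ P : Ideal V, P ≠ ⊥ → P.IsPrime → P = IsLocalRing.maximalIdeal V) ↔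
        (IsLocalRing.maximalIdeal V).IsPrincipal).1 ⟨hVic, hprimes⟩
  obtain ⟨w, hw⟩ := hprin.principal
  have hr0V : algebraMap C V (algebraMap R C r0) ≠ 0 := by
    intro h
    exact hr0' (inj (hinjV (by simpa using h)))
  have hr0m : algebraMap C V (algebraMap R C r0) ∈ RingHom.ker cV := by
    rw [RingHom.mem_ker, hcV, hcc]; exact hr0
  have hw0 : w ≠ 0 := by
    rintro rfl
    rw [hkerV, hw] at hr0m
    simp at hr0m
    exact hr0' (inj (by simpa using hr0m))
  obtain ⟨ψ, hψ, hψw⟩ := aux_series cV w hw0 (hkerV.trans hw)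
  refine ⟨ψ.comp ((IsScalarTower.toAlgHom ℂ C V).comp (IsScalarTower.toAlgHom ℂ R C)), ?_, r0,
    hr0, ?_⟩
  · intro r
    simp [hψ, hcV, hcc]
  · intro h
    have hk : RingHom.ker ψ ≠ ⊥ := by
      intro hk
      have : algebraMap C V (algebraMap R C r0) ∈ RingHom.ker ψ := by
        rw [RingHom.mem_ker]; simpa using h
      rw [hk] at this
      exact hr0V this
    have := hprimes _ hk (RingHom.ker_isPrime ψ)
    have hwm : w ∈ RingHom.ker ψ := by
      rw [this, hw]; exact Submodule.mem_span_singleton_self w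
    exact hψw hwm

theorem arc_dim_one {R : Type} [CommRing R] [IsDomain R] [Algebra ℂ R] [Algebra.FiniteType ℂ R]
    (c : R →ₐ[ℂ] ℂ) (hne : RingHom.ker c ≠ ⊥)
    (h1 : ∀ Q : Ideal R, Q.IsPrime → Q ≤ RingHom.ker c → Q = ⊥ ∨ Q = RingHom.ker c) :
    ∃ φ : R →ₐ[ℂ] PowerSeries ℂ, (∀ r, PowerSeries.constantCoeff (φ r) = c r) ∧
      ∃ r, c r = 0 ∧ φ r ≠ 0 := by
  obtain ⟨d, g, ginj, gfin⟩ := exists_finite_inj_algHom_of_fg ℂ R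
  let S := MvPolynomial (Fin d) ℂ
  let _ : Algebra S R := g.toRingHom.toAlgebra
  have hginj : Function.Injective (algebraMap S R) := ginj
  have : IsScalarTower ℂ S R := IsScalarTower.of_algebraMap_eq (fun x => (g.commutes x).symm)
  have : Module.Finite S R := gfin
  have : Module.IsTorsionFree S R := Module.isTorsionFree_iff_algebraMap_injective.2 hginj
  have : Algebra.IsIntegral S R := inferInstance
  let K := FractionRing R
  let L := FractionRing S
  have : FaithfulSMul S R := (faithfulSMul_iff_algebraMap_injective S R).2 hginj
  have : FaithfulSMul S K := inferInstance
  let _ : Algebra L K := FractionRing.liftAlgebra S K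
  have : IsScalarTower S L K := inferInstance
  have : IsLocalization (Algebra.algebraMapSubmonoid R (nonZeroDivisors S)) K :=
    inferInstance
  have hfd : FiniteDimensional L K := .of_isLocalization S R (nonZeroDivisors S)
  have : IsNoetherianRing (integralClosure S K) := integralClosure.isNoetherianRing (K := L) K
  have hfinC : Module.Finite S (integralClosure S K) := IsIntegralClosure.finite S L K _
  have : IsIntegrallyClosed (integralClosure S K) :=
    integralClosure.isIntegrallyClosedOfFiniteExtension L
  let ι : R →ₐ[S] integralClosure S K :=
    (IsScalarTower.toAlgHom S R K).codRestrict _ (fun x => by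
      exact (Algebra.IsIntegral.isIntegral (R := S) x).map (IsScalarTower.toAlgHom S R K))
  let _ : Algebra R (integralClosure S K) := ι.toRingHom.toAlgebra
  have : IsScalarTower S R (integralClosure S K) :=
    IsScalarTower.of_algebraMap_eq (fun x => (ι.commutes x).symm)
  have : IsScalarTower ℂ S K := inferInstance
  have : IsScalarTower ℂ S (integralClosure S K) := inferInstance
  have : IsScalarTower ℂ R (integralClosure S K) := IsScalarTower.of_algebraMap_eq (fun x => by
    rw [IsScalarTower.algebraMap_apply ℂ S, IsScalarTower.algebraMap_apply ℂ S R,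
      ← IsScalarTower.algebraMap_apply S R])
  have : Algebra.FiniteType ℂ (integralClosure S K) :=
    Algebra.FiniteType.trans (S := S) inferInstance inferInstance
  have : Algebra.IsIntegral R (integralClosure S K) := Algebra.IsIntegral.tower_top S
  refine arc_normal (R := R) (C := integralClosure S K) ?_ c hne h1
  intro x y h
  have := congrArg (Subtype.val) h
  exact IsFractionRing.injective R K this

theorem exists_arc {n : ℕ} (P : Ideal (MvPolynomial (Fin n) ℂ)) (hP : P.IsPrime) (p : Fin n → ℂ)
    (hlt : P < RingHom.ker (aeval p : MvPolynomial (Fin n) ℂ →ₐ[ℂ] ℂ)) :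
    ∃ φ : MvPolynomial (Fin n) ℂ →ₐ[ℂ] PowerSeries ℂ, (∀ g ∈ P, φ g = 0) ∧
      (∀ g, PowerSeries.constantCoeff (φ g) = eval p g) ∧ ∃ g, eval p g = 0 ∧ φ g ≠ 0 := by
  set m := RingHom.ker (aeval p : MvPolynomial (Fin n) ℂ →ₐ[ℂ] ℂ) with hm
  obtain ⟨P', ⟨hP'p, hPP', hP'm⟩, hmax⟩ := set_has_maximal_iff_noetherian.2
    (inferInstance : IsNoetherian (MvPolynomial (Fin n) ℂ) (MvPolynomial (Fin n) ℂ))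
    {P' : Ideal _ | P'.IsPrime ∧ P ≤ P' ∧ P' < m} ⟨P, hP, le_rfl, hlt⟩
  have hP'p : Ideal.IsPrime P' := hP'p
  let R := MvPolynomial (Fin n) ℂ ⧸ P'
  let c : R →ₐ[ℂ] ℂ := Ideal.Quotient.liftₐ P' (aeval p) (fun a ha => hP'm.le ha)
  have hc : ∀ x, c (Ideal.Quotient.mk P' x) = eval p x := fun x => rfl
  have hcomap : (RingHom.ker c).comap (Ideal.Quotient.mk P') = m := by
    ext x; rfl
  have hsurj : Function.Surjective (Ideal.Quotient.mk P') := Ideal.Quotient.mk_surjective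
  have hbot : (⊥ : Ideal R).comap (Ideal.Quotient.mk P') = P' := by
    exact Ideal.mk_ker
  obtain ⟨φ, h1, r, hr, hr'⟩ := arc_dim_one (R := R) c (by
    intro h
    rw [h, hbot] at hcomap
    exact hP'm.ne hcomap) (by
    intro Q hQ hQc
    by_cases hQb : Q = ⊥
    · exact Or.inl hQb
    right
    by_contra hne
    have hlt1 : Q.comap (Ideal.Quotient.mk P') < m := by
      rw [← hcomap]
      exact (Ideal.comap_mono hQc).lt_of_ne
        (fun h => hne (Ideal.comap_injective_of_surjective _ hsurj h))
    have hlt2 : P' < Q.comap (Ideal.Quotient.mk P') := by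
      conv_lhs => rw [← hbot]
      exact (Ideal.comap_mono bot_le).lt_of_ne
        (fun h => hQb (Ideal.comap_injective_of_surjective _ hsurj h).symm)
    exact hmax _ ⟨Ideal.comap_isPrime _ _, hPP'.trans hlt2.le, hlt1⟩ hlt2)
  obtain ⟨g, rfl⟩ := hsurj r
  refine ⟨φ.comp (Ideal.Quotient.mkₐ ℂ P'), ?_, ?_, g, hr, hr'⟩
  · intro x hx
    have : Ideal.Quotient.mk P' x = 0 := Ideal.Quotient.eq_zero_iff_mem.2 (hPP' hx)
    exact (congrArg φ this).trans (map_zero φ)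
  · intro x
    exact h1 _

theorem not_dvd_deriv (γ : PowerSeries ℂ) (h0 : γ ≠ 0) (hc : PowerSeries.constantCoeff γ = 0)
    (hd : γ ∣ PowerSeries.derivative ℂ γ) : False := by
  classical
  have hex : ∃ k, PowerSeries.coeff k γ ≠ 0 := by
    by_contra h
    push Not at h
    exact h0 (PowerSeries.ext h)
  obtain ⟨hk, hmin⟩ := And.intro (Nat.find_spec hex) (fun m => Nat.find_min hex (m := m))
  set k := Nat.find hex
  have hk0 : k ≠ 0 := by
    intro h
    rw [h] at hk
    exact hk (by simpa using hc)
  obtain ⟨l, hl⟩ := Nat.exists_eq_succ_of_ne_zero hk0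
  have hX : (PowerSeries.X : PowerSeries ℂ) ^ k ∣ γ :=
    PowerSeries.X_pow_dvd_iff.2 (fun m hm => not_not.1 (hmin m hm))
  have := PowerSeries.X_pow_dvd_iff.1 (hX.trans hd) l (by omega)
  rw [PowerSeries.coeff_derivative] at this
  rw [hl] at hk
  rcases mul_eq_zero.1 this with h | h
  · exact hk h
  · exact Nat.cast_add_one_ne_zero l h

theorem deriv_arc {n : ℕ} (φ : MvPolynomial (Fin n) ℂ →ₐ[ℂ] PowerSeries ℂ)
    (g : MvPolynomial (Fin n) ℂ) :
    PowerSeries.derivative ℂ (φ g) =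
      ∑ j, φ (pderiv j g) * PowerSeries.derivative ℂ (φ (X j)) := by
  induction g using MvPolynomial.induction_on with
  | C a =>
    have : φ (C a) = algebraMap ℂ _ a := φ.commutes a
    simp [this]
  | add p q hp hq => simp [hp, hq, add_mul, Finset.sum_add_distrib]
  | mul_X p i hp =>
    rw [map_mul, Derivation.leibniz, hp]
    simp only [Derivation.leibniz, pderiv_X, smul_eq_mul, map_add, map_mul, add_mul,
      Finset.sum_add_distrib, Finset.mul_sum]
    congr 1
    · rw [Finset.sum_eq_single i]
      · simp
      · intro j _ hj
        simp [hj.symm]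
      · simp
    · exact Finset.sum_congr rfl fun j _ => by ring

theorem strict_core {n : ℕ} (f : Fin n → MvPolynomial (Fin n) ℂ) (p : Fin n → ℂ)
    (hzero : ∀ i, eval p (f i) = 0)
    (hart : ∀ P : Ideal (MvPolynomial (Fin n) ℂ), P.IsPrime → Ideal.span (Set.range f) ≤ P →
      P ≤ RingHom.ker (aeval p : MvPolynomial (Fin n) ℂ →ₐ[ℂ] ℂ) →
      P = RingHom.ker (aeval p : MvPolynomial (Fin n) ℂ →ₐ[ℂ] ℂ))
    (k : Fin n) (b : Fin n → MvPolynomial (Fin n) ℂ) (hb : eval p (b k) ≠ 0)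
    (hh : ∀ j, ∃ u, eval p u ≠ 0 ∧
      u * ∑ i, b i * pderiv j (f i) ∈ Ideal.span (Set.range f)) : False := by
  set m := RingHom.ker (aeval p : MvPolynomial (Fin n) ℂ →ₐ[ℂ] ℂ) with hm
  have hmp : m.IsPrime := RingHom.ker_isPrime _
  have hmem : ∀ x, x ∈ m ↔ eval p x = 0 := fun x => Iff.rfl
  have hJm : Ideal.span (f '' {i | i ≠ k}) ≤ m := by
    rw [Ideal.span_le]
    rintro _ ⟨i, _, rfl⟩
    exact hzero i
  have hex : ∃ P : Ideal (MvPolynomial (Fin n) ℂ), P.IsPrime ∧ Ideal.span (f '' {i | i ≠ k}) ≤ P ∧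
      P < m := by
    by_contra hno
    push Not at hno
    have hmin : m ∈ (Ideal.span (f '' {i | i ≠ k})).minimalPrimes := by
      refine ⟨⟨hmp, hJm⟩, ?_⟩
      rintro Q ⟨hQ, hQJ⟩ hQm
      by_contra hlt
      exact hno Q hQ hQJ (lt_of_le_not_ge hQm hlt)
    have h1 := Ideal.height_le_card_of_mem_minimalPrimes_span (Set.toFinite _) hmin
    have h2 : (f '' {i | i ≠ k}).ncard ≤ n - 1 := by
      refine (Set.ncard_image_le (Set.toFinite _)).trans ?_
      have : {i : Fin n | i ≠ k} = ({k} : Set (Fin n))ᶜ := by ext; simp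
      rw [this, Set.ncard_compl]
      simp
    have h3 := (height_max p).trans h1
    have h4 : n ≤ (f '' {i | i ≠ k}).ncard := by exact_mod_cast h3
    have := k.pos
    omega
  obtain ⟨P, hP, hJP, hlt⟩ := hex
  obtain ⟨φ, hφP, hφc, g, hg, hg'⟩ := exists_arc P hP p hlt
  have hφf : ∀ i, i ≠ k → φ (f i) = 0 := fun i hi =>
    hφP _ (hJP (Ideal.subset_span ⟨i, hi, rfl⟩))
  have hγ : φ (f k) ≠ 0 := by
    intro h
    have := hart (RingHom.ker φ) (RingHom.ker_isPrime φ) (by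
      rw [Ideal.span_le]
      rintro _ ⟨i, rfl⟩
      by_cases hi : i = k
      · subst hi; exact h
      · exact hφf i hi) (by
      intro x hx
      rw [hmem, ← hφc, (RingHom.mem_ker).1 hx, map_zero])
    have hgm : g ∈ m := hg
    rw [← this] at hgm
    exact hg' hgm
  have hdvdI : ∀ x ∈ Ideal.span (Set.range f), φ (f k) ∣ φ x := by
    intro x hx
    have : Ideal.span (Set.range f) ≤ (Ideal.span {φ (f k)}).comap φ := by
      rw [Ideal.span_le]
      rintro _ ⟨i, rfl⟩
      by_cases hi : i = k
      · subst hi; exact Ideal.mem_span_singleton_self _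
      · simp [hφf i hi]
    exact Ideal.mem_span_singleton.1 (this hx)
  have hunit : ∀ u, eval p u ≠ 0 → IsUnit (φ u) := by
    intro u hu
    rw [PowerSeries.isUnit_iff_constantCoeff, hφc]
    exact isUnit_iff_ne_zero.2 hu
  have hG : φ (∑ i, b i * f i) = φ (b k) * φ (f k) := by
    rw [map_sum, Finset.sum_eq_single k]
    · simp
    · intro i _ hi
      simp [hφf i hi]
    · simp
  have hdG : ∀ j, φ (f k) ∣ φ (pderiv j (∑ i, b i * f i)) := by
    intro j
    obtain ⟨u, hu, hu'⟩ := hh j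
    have h1 := hdvdI _ hu'
    rw [map_mul] at h1
    have h2 := ((hunit u hu).dvd_mul_left).1 h1
    have : pderiv j (∑ i, b i * f i) = ∑ i, b i * pderiv j (f i) + ∑ i, pderiv j (b i) * f i := by
      rw [map_sum, ← Finset.sum_add_distrib]
      refine Finset.sum_congr rfl fun i _ => ?_
      rw [Derivation.leibniz]
      simp only [smul_eq_mul]
      ring
    rw [this, map_add]
    refine dvd_add h2 (hdvdI _ ?_)
    exact Ideal.sum_mem _ fun i _ => Ideal.mul_mem_left _ _ (Ideal.subset_span ⟨i, rfl⟩)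
  have hdd : φ (f k) ∣ PowerSeries.derivative ℂ (φ (b k) * φ (f k)) := by
    rw [← hG, deriv_arc]
    exact Finset.dvd_sum fun j _ => (hdG j).mul_right _
  rw [Derivation.leibniz, smul_eq_mul, smul_eq_mul, dvd_add_left (dvd_mul_right _ _)] at hdd
  refine not_dvd_deriv (φ (f k)) hγ ?_ (((hunit _ hb).dvd_mul_left).1 hdd)
  rw [hφc, hzero]

theorem ext_hom {R C : Type*} [CommRing R] [Algebra ℂ R] [CommRing C]
    [Algebra ℂ C] [Algebra.FiniteType ℂ C]
    [Algebra R C] [IsScalarTower ℂ R C] [Algebra.IsIntegral R C]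
    (inj : Function.Injective (algebraMap R C)) (c : R →ₐ[ℂ] ℂ) :
    ∃ c0 : C →ₐ[ℂ] ℂ, ∀ r, c0 (algebraMap R C r) = c r := by
  have hcs : Function.Surjective c := fun z => ⟨algebraMap ℂ R z, by simp⟩
  have hmax : (RingHom.ker c).IsMaximal := RingHom.ker_isMaximal_of_surjective c hcs
  obtain ⟨Q, hQmax, hQ⟩ := Ideal.exists_ideal_over_maximal_of_isIntegral (S := C)
    (RingHom.ker c) (by rw [(RingHom.injective_iff_ker_eq_bot _).1 inj]; exact bot_le)
  have hQp : Q.IsPrime := hQmax.isPrime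
  let _ : Field (C ⧸ Q) := Ideal.Quotient.field Q
  have hfin : Module.Finite ℂ (C ⧸ Q) := finite_of_finite_type_of_isJacobsonRing ℂ (C ⧸ Q)
  have hbij : Function.Bijective (algebraMap ℂ (C ⧸ Q)) :=
    IsAlgClosed.algebraMap_bijective_of_isIntegral
  let e : ℂ ≃ₐ[ℂ] (C ⧸ Q) := AlgEquiv.ofBijective (Algebra.ofId ℂ (C ⧸ Q)) hbij
  let c0 : C →ₐ[ℂ] ℂ := e.symm.toAlgHom.comp (Ideal.Quotient.mkₐ ℂ Q)
  have hc0 : ∀ x, c0 x = 0 ↔ x ∈ Q := by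
    intro x
    simp [c0, Ideal.Quotient.eq_zero_iff_mem]
  refine ⟨c0, ?_⟩
  intro r
  have : r - algebraMap ℂ R (c r) ∈ RingHom.ker c := by simp [RingHom.mem_ker]
  rw [← hQ, Ideal.mem_comap, ← hc0] at this
  rw [map_sub, map_sub, ← IsScalarTower.algebraMap_apply, AlgHom.commutes, sub_eq_zero] at this
  simpa using this

theorem small_root (ν : Polynomial ℂ) (hν : ν.Monic) (hd : ν.natDegree ≠ 0) :
    ∃ z, ν.IsRoot z ∧ ‖z‖ ^ ν.natDegree ≤ ‖ν.coeff 0‖ := by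
  have hsp : ν.Splits := IsAlgClosed.splits ν
  have hcard : Multiset.card ν.roots = ν.natDegree := hsp.natDegree_eq_card_roots.symm
  have hprod : ‖ν.coeff 0‖ = ‖ν.roots.prod‖ := by
    have := Polynomial.Splits.coeff_zero_eq_prod_roots_of_monic hsp hν
    rw [this]
    simp
  have gen : ∀ (b : ℝ), 0 ≤ b → ∀ s : Multiset ℂ, (∀ x ∈ s, b ≤ ‖x‖) →
      b ^ Multiset.card s ≤ ‖s.prod‖ := by
    intro b hb s
    induction s using Multiset.induction_on with
    | empty => simp
    | cons a s ih =>
      intro h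
      rw [Multiset.card_cons, Multiset.prod_cons, norm_mul, pow_succ']
      exact mul_le_mul (h a (by simp)) (ih fun x hx => h x (by simp [hx])) (by positivity)
        (by positivity)
  have hne : ν.roots.toFinset.Nonempty := by
    rw [Multiset.toFinset_nonempty]
    intro h
    rw [h] at hcard
    exact hd hcard.symm
  obtain ⟨z, hz, hmin⟩ := Finset.exists_min_image ν.roots.toFinset (fun z => ‖z‖) hne
  refine ⟨z, (Polynomial.mem_roots'.1 (Multiset.mem_toFinset.1 hz)).2, ?_⟩
  rw [hprod, ← hcard]
  exact gen _ (norm_nonneg _) _ fun x hx => hmin x (Multiset.mem_toFinset.2 hx)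

theorem root_bound (ν : Polynomial ℂ) (hν : ν.Monic) (z : ℂ) (hz : ν.IsRoot z) :
    ‖z‖ ≤ 1 + ∑ j ∈ Finset.range ν.natDegree, ‖ν.coeff j‖ := by
  have h := (hz.norm_lt_cauchyBound hν.ne_zero).le
  have h2 : ν.cauchyBound ≤ (∑ j ∈ Finset.range ν.natDegree, ‖ν.coeff j‖₊) + 1 := by
    rw [Polynomial.cauchyBound, hν.leadingCoeff]
    simp only [nnnorm_one, div_one]
    gcongr
    apply Finset.sup_le
    intro j hj
    exact Finset.single_le_sum (f := fun j => ‖ν.coeff j‖₊) (fun _ _ => zero_le) hj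
  have h3 : (ν.cauchyBound : ℝ) ≤ (∑ j ∈ Finset.range ν.natDegree, ‖ν.coeff j‖) + 1 := by
    have h4 := NNReal.coe_le_coe.2 h2
    simpa using h4
  linarith

theorem exists_sep {R S : Type*} [CommRing R] [CommRing S] [Algebra ℂ R] [Algebra S R]
    [Module.Finite S R] (c : R →ₐ[ℂ] ℂ) :
    ∃ e : R, c e = 0 ∧ ∀ c' : R →ₐ[ℂ] ℂ,
      (∀ x, c' (algebraMap S R x) = c (algebraMap S R x)) → c' e = 0 → c' = c := by
  have hcs : ∀ c : R →ₐ[ℂ] ℂ, Function.Surjective c := fun c z => ⟨algebraMap ℂ R z, by simp⟩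
  have hmax : ∀ c : R →ₐ[ℂ] ℂ, (RingHom.ker c).IsMaximal := fun c =>
    RingHom.ker_isMaximal_of_surjective c (hcs c)
  let I : Ideal S := (RingHom.ker c).comap (algebraMap S R)
  let T : Set (Ideal R) := I.primesOver R \ {RingHom.ker c}
  have hT : T.Finite := (Algebra.QuasiFinite.finite_primesOver I).subset Set.sdiff_subset
  let T' : Set (Ideal R) := T ∩ {Q | Q.IsMaximal}
  have hT' : T'.Finite := hT.subset Set.inter_subset_left
  have hnot : ¬ ((RingHom.ker c : Set R) ⊆ ⋃ i ∈ T', (i : Set R)) := by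
    rw [Ideal.subset_union_prime_finite hT' (f := fun i => i) ⊥ ⊥
      (fun i hi _ _ => Ideal.IsMaximal.isPrime hi.2)]
    rintro ⟨Q, hQ, hle⟩
    exact hQ.1.2 ((hmax c).eq_of_le hQ.2.ne_top hle).symm
  rw [Set.not_subset] at hnot
  obtain ⟨e, he, he'⟩ := hnot
  refine ⟨e, he, fun c' hc' hce => ?_⟩
  by_contra hne
  apply he'
  simp only [Set.mem_iUnion]
  refine ⟨RingHom.ker c', ⟨⟨⟨(hmax c').isPrime, ⟨?_⟩⟩, ?_⟩, hmax c'⟩, hce⟩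
  · ext x
    simp [I, Ideal.under, RingHom.mem_ker, hc']
  · intro h
    apply hne
    ext r
    have h1 : r - algebraMap ℂ R (c r) ∈ RingHom.ker c := by simp [RingHom.mem_ker]
    rw [← (Set.mem_singleton_iff.1 h)] at h1
    simpa [RingHom.mem_ker, sub_eq_zero] using h1

theorem toAdjoin_root_aux (S : Type*) {R : Type*} [CommRing S] [CommRing R] [Algebra S R] (e : R) :
    ((AdjoinRoot.Minpoly.toAdjoin S e (AdjoinRoot.root (minpoly S e)) :
      Algebra.adjoin S {e}) : R) = e := by
  simp [AdjoinRoot.Minpoly.toAdjoin]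

theorem lift_point {R : Type*} [CommRing R] [IsDomain R] [Algebra ℂ R] [Algebra.FiniteType ℂ R]
    {d : ℕ} [Algebra (MvPolynomial (Fin d) ℂ) R] [IsScalarTower ℂ (MvPolynomial (Fin d) ℂ) R]
    [Module.Finite (MvPolynomial (Fin d) ℂ) R]
    (hinj : Function.Injective (algebraMap (MvPolynomial (Fin d) ℂ) R)) (e : R) :
    ∀ q : Fin d → ℂ, ∃ c : R →ₐ[ℂ] ℂ,
      (∀ x, c (algebraMap (MvPolynomial (Fin d) ℂ) R x) = eval q x) ∧
      ‖c e‖ ^ (minpoly (MvPolynomial (Fin d) ℂ) e).natDegree ≤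
        ‖eval q ((minpoly (MvPolynomial (Fin d) ℂ) e).coeff 0)‖ := by
  intro q
  have : Module.IsTorsionFree (MvPolynomial (Fin d) ℂ) R :=
    Module.isTorsionFree_iff_algebraMap_injective.2 hinj
  set S := MvPolynomial (Fin d) ℂ
  have hint : IsIntegral S e := Algebra.IsIntegral.isIntegral e
  set μ := minpoly S e with hμdef
  have hμ : μ.Monic := minpoly.monic hint
  have hdeg : μ.natDegree ≠ 0 := (minpoly.natDegree_pos hint).ne'
  have hdeg' : (μ.map (eval q)).natDegree = μ.natDegree := hμ.natDegree_map _
  obtain ⟨z, hz, hz'⟩ := small_root (μ.map (eval q)) (hμ.map _) (by rw [hdeg']; exact hdeg)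
  rw [hdeg', Polynomial.coeff_map] at hz'
  let A := Algebra.adjoin S {e}
  let E : AdjoinRoot μ ≃ₐ[S] A := minpoly.equivAdjoin hint
  let χ0 : AdjoinRoot μ →+* ℂ := AdjoinRoot.lift (eval q) z (by
    rw [← Polynomial.eval_map]; exact hz)
  let χ : A →ₐ[ℂ] ℂ := { χ0.comp E.symm.toRingEquiv.toRingHom with
    commutes' := by
      intro k
      have : algebraMap ℂ A k = algebraMap S A (C k) := by
        rw [IsScalarTower.algebraMap_apply ℂ S A]; rfl
      rw [this]
      change χ0 (E.symm (algebraMap S A (C k))) = _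
      rw [AlgEquiv.commutes]
      change χ0 (AdjoinRoot.of μ (C k)) = _
      simp only [χ0, AdjoinRoot.lift_of]
      exact eval_C k }
  have : Algebra.IsIntegral A R := Algebra.IsIntegral.tower_top S
  obtain ⟨c, hc⟩ := ext_hom (R := A) (C := R) Subtype.val_injective χ
  have h1 : ∀ x : S, c (algebraMap S R x) = eval q x := by
    intro x
    rw [IsScalarTower.algebraMap_apply S A R, hc]
    change χ0 (E.symm (algebraMap S A x)) = _
    rw [AlgEquiv.commutes]
    change χ0 (AdjoinRoot.of μ x) = _
    simp [χ0]
  refine ⟨c, h1, ?_⟩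
  have h2 : c e = z := by
    have h3 : e = algebraMap A R (E (AdjoinRoot.root μ)) := by
      change e = ((AdjoinRoot.Minpoly.toAdjoin S e (AdjoinRoot.root μ) : A) : R)
      exact (toAdjoin_root_aux S e).symm
    rw [h3, hc]
    change χ0 (E.symm (E _)) = _
    simp [χ0]
  rw [h2]
  exact hz'

theorem near_homs {R : Type} [CommRing R] [IsDomain R] [Algebra ℂ R] [Algebra.FiniteType ℂ R]
    (c : R →ₐ[ℂ] ℂ) (hne : RingHom.ker c ≠ ⊥) :
    ∃ cm : ℕ → R →ₐ[ℂ] ℂ, (∀ m, cm m ≠ c) ∧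
      ∀ r, Filter.Tendsto (fun m => cm m r) (Filter.hyperfilter ℕ : Filter ℕ) (nhds (c r)) := by
  obtain ⟨d, g, ginj, gfin⟩ := exists_finite_inj_algHom_of_fg ℂ R
  let _ : Algebra (MvPolynomial (Fin d) ℂ) R := g.toRingHom.toAlgebra
  have hginj : Function.Injective (algebraMap (MvPolynomial (Fin d) ℂ) R) := ginj
  have : IsScalarTower ℂ (MvPolynomial (Fin d) ℂ) R :=
    IsScalarTower.of_algebraMap_eq (fun x => (g.commutes x).symm)
  have : Module.Finite (MvPolynomial (Fin d) ℂ) R := gfin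
  have hint : Algebra.IsIntegral (MvPolynomial (Fin d) ℂ) R := inferInstance
  have hd : 0 < d := by
    rcases Nat.eq_zero_or_pos d with rfl | h
    · exfalso
      have hS : IsField (MvPolynomial (Fin 0) ℂ) :=
        (isEmptyAlgEquiv ℂ (Fin 0)).toMulEquiv.isField (Field.toIsField ℂ)
      have hR : IsField R := isField_of_isIntegral_of_isField' hS
      let _ := hR.toField
      exact hne ((RingHom.injective_iff_ker_eq_bot _).1 (c : R →+* ℂ).injective)
    · exact h
  obtain ⟨e, hce, hsep⟩ := exists_sep (S := MvPolynomial (Fin d) ℂ) c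
  let q : Fin d → ℂ := fun i => c (algebraMap (MvPolynomial (Fin d) ℂ) R (X i))
  have hq : ∀ x, c (algebraMap (MvPolynomial (Fin d) ℂ) R x) = eval q x := by
    have : c.comp (IsScalarTower.toAlgHom ℂ (MvPolynomial (Fin d) ℂ) R) = aeval q := by
      apply MvPolynomial.algHom_ext
      intro i
      simp [q]
    intro x
    exact DFunLike.congr_fun this x
  let qm : ℕ → Fin d → ℂ := fun m i => q i + 1 / ((m : ℂ) + 1)
  have hqm : ∀ x : MvPolynomial (Fin d) ℂ,
      Filter.Tendsto (fun m => eval (qm m) x) Filter.atTop (nhds (eval q x)) := by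
    intro x
    have h1 : Filter.Tendsto qm Filter.atTop (nhds q) := by
      rw [tendsto_pi_nhds]
      intro i
      have h0 : Filter.Tendsto (fun m : ℕ => 1 / ((m : ℂ) + 1)) Filter.atTop (nhds 0) :=
        tendsto_one_div_add_atTop_nhds_zero_nat (𝕜 := ℂ)
      simpa [qm] using h0.const_add (q i)
    exact ((MvPolynomial.continuous_eval x).tendsto q).comp h1
  have hle : (Filter.hyperfilter ℕ : Filter ℕ) ≤ Filter.atTop := by
    rw [← Nat.cofinite_eq_atTop]
    exact Filter.hyperfilter_le_cofinite
  choose cm hcm hcme using fun m => lift_point hginj e (qm m)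
  refine ⟨cm, ?_, ?_⟩
  · intro m h
    have h1 := hcm m (X ⟨0, hd⟩)
    rw [h, hq] at h1
    simp only [eval_X, qm] at h1
    have h2 : (1 : ℂ) / ((m : ℂ) + 1) = 0 := by linear_combination -h1
    have h3 : (m : ℂ) + 1 ≠ 0 := by exact_mod_cast Nat.succ_ne_zero m
    rw [div_eq_zero_iff] at h2
    simp [h3] at h2
  · have hlim : ∀ r, ∃ z, Filter.Tendsto (fun m => cm m r) (Filter.hyperfilter ℕ : Filter ℕ)
        (nhds z) := by
      intro r
      obtain ⟨μ, hμ, hμr⟩ := hint.isIntegral r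
      let B : ℕ → ℝ := fun m => 1 + ∑ j ∈ Finset.range μ.natDegree, ‖eval (qm m) (μ.coeff j)‖
      let B0 : ℝ := 1 + ∑ j ∈ Finset.range μ.natDegree, ‖eval q (μ.coeff j)‖
      have hB : Filter.Tendsto B Filter.atTop (nhds B0) :=
        (tendsto_finsetSum _ fun j _ => (hqm (μ.coeff j)).norm).const_add 1
      have hcB : ∀ m, ‖cm m r‖ ≤ B m := by
        intro m
        have hroot : (μ.map (eval (qm m))).IsRoot (cm m r) := by
          rw [Polynomial.IsRoot, Polynomial.eval_map]
          have h1 := congrArg (cm m) hμr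
          rw [map_zero, ← AlgHom.coe_toRingHom, Polynomial.hom_eval₂] at h1
          have h2 : eval (qm m) = ((cm m : R →ₐ[ℂ] ℂ) : R →+* ℂ).comp
              (algebraMap (MvPolynomial (Fin d) ℂ) R) :=
            RingHom.ext (fun x => (hcm m x).symm)
          rw [h2]
          exact h1
        have := root_bound _ (hμ.map (eval (qm m))) _ hroot
        simpa [hμ.natDegree_map, Polynomial.coeff_map] using this
      have hev : ∀ᶠ m in (Filter.hyperfilter ℕ : Filter ℕ),
          cm m r ∈ Metric.closedBall (0 : ℂ) (B0 + 1) := by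
        have := (hB.mono_left hle).eventually (gt_mem_nhds (lt_add_one B0))
        filter_upwards [this] with m hm
        rw [mem_closedBall_zero_iff]
        exact (hcB m).trans hm.le
      obtain ⟨z, -, hz⟩ := (isCompact_closedBall (0 : ℂ) (B0 + 1)).ultrafilter_le_nhds
        ((Filter.hyperfilter ℕ).map (fun m => cm m r)) (Filter.le_principal_iff.2 hev)
      exact ⟨z, hz⟩
    choose l hl using hlim
    have huniq : ∀ {r z}, Filter.Tendsto (fun m => cm m r) (Filter.hyperfilter ℕ : Filter ℕ)
        (nhds z) → l r = z := fun h => tendsto_nhds_unique (hl _) h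
    let c' : R →ₐ[ℂ] ℂ :=
      { toFun := l
        map_one' := huniq (by simp)
        map_zero' := huniq (by simp)
        map_mul' := fun x y => huniq (by simpa using (hl x).mul (hl y))
        map_add' := fun x y => huniq (by simpa using (hl x).add (hl y))
        commutes' := fun k => huniq (by simp) }
    have hc' : c' = c := by
      apply hsep
      · intro x
        apply huniq
        rw [hq]
        simp only [hcm]
        exact (hqm x).mono_left hle
      · apply huniq
        have hinte : IsIntegral (MvPolynomial (Fin d) ℂ) e := hint.isIntegral e
        set μ := minpoly (MvPolynomial (Fin d) ℂ) e with hμ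
        have hμ0 : eval q (μ.coeff 0) = 0 := by
          have h1 := congrArg c (minpoly.aeval (MvPolynomial (Fin d) ℂ) e)
          rw [map_zero, ← AlgHom.coe_toRingHom, Polynomial.aeval_def, Polynomial.hom_eval₂] at h1
          have h2 : (c : R →+* ℂ) e = 0 := hce
          rw [h2, Polynomial.eval₂_at_zero] at h1
          rw [← hq]
          exact h1
        have hdeg : μ.natDegree ≠ 0 := (minpoly.natDegree_pos hinte).ne'
        have h3 : Filter.Tendsto (fun m => ‖cm m e‖ ^ μ.natDegree)
            (Filter.hyperfilter ℕ : Filter ℕ) (nhds 0) := by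
          refine squeeze_zero (fun m => by positivity) hcme ?_
          have := ((hqm (μ.coeff 0)).mono_left hle).norm
          rwa [hμ0, norm_zero] at this
        have h4 := ((hl e).norm.pow μ.natDegree)
        have h5 := tendsto_nhds_unique h4 h3
        have h6 : l e = 0 := by
          rw [pow_eq_zero_iff hdeg, norm_eq_zero] at h5
          exact h5
        rw [← h6]
        exact hl e
    intro r
    have : c r = l r := by rw [← hc']; rfl
    rw [this]
    exact hl r

theorem isolated_art {n : ℕ} (f : Fin n → MvPolynomial (Fin n) ℂ) (p : Fin n → ℂ)
    (hisolated : ∃ ε > 0, ∀ y : Fin n → ℂ, dist y p < ε → (∀ i, eval y (f i) = 0) → y = p) :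
    ∀ P : Ideal (MvPolynomial (Fin n) ℂ), P.IsPrime → Ideal.span (Set.range f) ≤ P →
      P ≤ RingHom.ker (aeval p : MvPolynomial (Fin n) ℂ →ₐ[ℂ] ℂ) →
      P = RingHom.ker (aeval p : MvPolynomial (Fin n) ℂ →ₐ[ℂ] ℂ) := by
  intro P hP hfP hPm
  by_contra hPne
  obtain ⟨ε, hε, hiso⟩ := hisolated
  let R := MvPolynomial (Fin n) ℂ ⧸ P
  let c : R →ₐ[ℂ] ℂ := Ideal.Quotient.liftₐ P (aeval p) (fun a ha => hPm ha)
  have hcomap : (RingHom.ker c).comap (Ideal.Quotient.mk P) =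
      RingHom.ker (aeval p : MvPolynomial (Fin n) ℂ →ₐ[ℂ] ℂ) := by
    ext x; rfl
  have hbot : (⊥ : Ideal R).comap (Ideal.Quotient.mk P) = P := by
    exact Ideal.mk_ker
  obtain ⟨cm, hcm, hlim⟩ := near_homs c (by
    intro h
    rw [h, hbot] at hcomap
    exact hPne hcomap)
  let y : ℕ → Fin n → ℂ := fun m i => cm m (Ideal.Quotient.mk P (X i))
  have hy : ∀ m x, cm m (Ideal.Quotient.mk P x) = eval (y m) x := by
    intro m
    have : (cm m).comp (Ideal.Quotient.mkₐ ℂ P) = aeval (y m) := by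
      apply MvPolynomial.algHom_ext
      intro i
      simp [y]
      rfl
    intro x
    exact DFunLike.congr_fun this x
  have hyt : Filter.Tendsto y (Filter.hyperfilter ℕ : Filter ℕ) (nhds p) := by
    rw [tendsto_pi_nhds]
    intro i
    have h1 := hlim (Ideal.Quotient.mk P (X i))
    have h2 : c (Ideal.Quotient.mk P (X i)) = p i := by
      change (aeval p (X i : MvPolynomial (Fin n) ℂ) : ℂ) = p i
      simp
    rw [h2] at h1
    exact h1
  obtain ⟨m, hm⟩ := (hyt.eventually (Metric.ball_mem_nhds p hε)).exists
  have hyp : y m = p := hiso (y m) hm (fun i => by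
    rw [← hy, Ideal.Quotient.eq_zero_iff_mem.2 (hfP (Ideal.subset_span ⟨i, rfl⟩)), map_zero])
  apply hcm m
  ext r
  obtain ⟨x, rfl⟩ := Ideal.Quotient.mk_surjective r
  rw [hy, hyp]
  rfl

theorem mem_span_X_sub_C {n : ℕ} (p : Fin n → ℂ) (x : MvPolynomial (Fin n) ℂ) :
    x ∈ Ideal.span (Set.range fun i : Fin n => X i - C (p i)) ↔ eval p x = 0 := by
  set I := Ideal.span (Set.range fun i : Fin n => (X i - C (p i) : MvPolynomial (Fin n) ℂ))
  constructor
  · intro h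
    have : I ≤ RingHom.ker (eval p) := by
      rw [Ideal.span_le]
      rintro _ ⟨i, rfl⟩
      simp [RingHom.mem_ker]
    exact this h
  · intro h
    have h1 : (Ideal.Quotient.mkₐ ℂ I) =
        (Algebra.ofId ℂ (MvPolynomial (Fin n) ℂ ⧸ I)).comp (aeval p) := by
      apply MvPolynomial.algHom_ext
      intro i
      simp only [AlgHom.comp_apply, aeval_X]
      change Ideal.Quotient.mk I (X i) = Ideal.Quotient.mk I (C (p i))
      rw [Ideal.Quotient.eq]
      exact Ideal.subset_span ⟨i, rfl⟩
    have h2 := DFunLike.congr_fun h1 x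
    have h3 : (aeval p x : ℂ) = 0 := h
    rw [AlgHom.comp_apply, h3, map_zero] at h2
    exact Ideal.Quotient.eq_zero_iff_mem.1 h2

theorem mk_mem_maxIdealAt {n : ℕ} {H : Set (MvPolynomial (Fin n) ℂ)} {p : Fin n → ℂ}
    (hH : ∀ h ∈ H, eval p h = 0) (x : MvPolynomial (Fin n) ℂ) :
    Ideal.Quotient.mk (Ideal.span H) x ∈ maxIdealAt H p ↔ eval p x = 0 := by
  rw [maxIdealAt, Ideal.mem_map_iff_of_surjective _ Ideal.Quotient.mk_surjective]
  constructor
  · rintro ⟨y, hy, hyx⟩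
    rw [mem_span_X_sub_C] at hy
    rw [Ideal.Quotient.eq] at hyx
    have : Ideal.span H ≤ RingHom.ker (eval p) := Ideal.span_le.2 hH
    have h1 := this hyx
    rw [RingHom.mem_ker, map_sub, hy, zero_sub, neg_eq_zero] at h1
    exact h1
  · intro h
    exact ⟨x, (mem_span_X_sub_C p x).2 h, rfl⟩

theorem maxIdealAt_prime {n : ℕ} {H : Set (MvPolynomial (Fin n) ℂ)} {p : Fin n → ℂ}
    (hH : ∀ h ∈ H, eval p h = 0) : (maxIdealAt H p).IsPrime := by
  refine ⟨?_, ?_⟩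
  · rw [Ne, Ideal.eq_top_iff_one, ← map_one (Ideal.Quotient.mk (Ideal.span H)),
      mk_mem_maxIdealAt hH]
    simp
  · intro x y
    obtain ⟨x, rfl⟩ := Ideal.Quotient.mk_surjective x
    obtain ⟨y, rfl⟩ := Ideal.Quotient.mk_surjective y
    rw [← map_mul, mk_mem_maxIdealAt hH, mk_mem_maxIdealAt hH, mk_mem_maxIdealAt hH, map_mul,
      mul_eq_zero]
    exact id

/-- The canonical map from the polynomial ring to the local ring at `p`. -/
noncomputable def locMap {n : ℕ} (H : Set (MvPolynomial (Fin n) ℂ)) (p : Fin n → ℂ)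
    [(maxIdealAt H p).IsPrime] :
    MvPolynomial (Fin n) ℂ →ₐ[ℂ] Localization.AtPrime (maxIdealAt H p) :=
  (IsScalarTower.toAlgHom ℂ (MvPolynomial (Fin n) ℂ ⧸ Ideal.span H)
    (Localization.AtPrime (maxIdealAt H p))).comp (Ideal.Quotient.mkₐ ℂ (Ideal.span H))

section
variable {n : ℕ} {H : Set (MvPolynomial (Fin n) ℂ)} {p : Fin n → ℂ}
  [(maxIdealAt H p).IsPrime]

theorem locMap_apply (x : MvPolynomial (Fin n) ℂ) : locMap H p x =
    algebraMap _ (Localization.AtPrime (maxIdealAt H p)) (Ideal.Quotient.mk (Ideal.span H) x) :=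
  rfl

theorem locMap_mem {h : MvPolynomial (Fin n) ℂ} (hh : h ∈ Ideal.span H) : locMap H p h = 0 := by
  rw [locMap_apply, Ideal.Quotient.eq_zero_iff_mem.2 hh, map_zero]

theorem locMap_isUnit (hH : ∀ h ∈ H, eval p h = 0) (u : MvPolynomial (Fin n) ℂ) :
    IsUnit (locMap H p u) ↔ eval p u ≠ 0 := by
  rw [locMap_apply, IsLocalization.AtPrime.isUnit_to_map_iff _ (maxIdealAt H p)]
  exact not_congr (mk_mem_maxIdealAt hH u)

theorem locMap_surj (hH : ∀ h ∈ H, eval p h = 0)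
    (a : Localization.AtPrime (maxIdealAt H p)) :
    ∃ x u, eval p u ≠ 0 ∧ locMap H p u * a = locMap H p x := by
  obtain ⟨⟨x, u⟩, hx⟩ := IsLocalization.surj (maxIdealAt H p).primeCompl a
  obtain ⟨x, rfl⟩ := Ideal.Quotient.mk_surjective x
  obtain ⟨u, hu⟩ := u
  obtain ⟨u, rfl⟩ := Ideal.Quotient.mk_surjective u
  refine ⟨x, u, ?_, ?_⟩
  · rw [Ne, ← mk_mem_maxIdealAt hH]
    exact hu
  · rw [mul_comm]
    exact hx

theorem locMap_eq_zero (hH : ∀ h ∈ H, eval p h = 0) {x : MvPolynomial (Fin n) ℂ}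
    (hx : locMap H p x = 0) : ∃ u, eval p u ≠ 0 ∧ u * x ∈ Ideal.span H := by
  rw [locMap_apply, IsLocalization.map_eq_zero_iff (maxIdealAt H p).primeCompl] at hx
  obtain ⟨⟨u, hu⟩, hux⟩ := hx
  obtain ⟨u, rfl⟩ := Ideal.Quotient.mk_surjective u
  refine ⟨u, ?_, ?_⟩
  · rw [Ne, ← mk_mem_maxIdealAt hH]
    exact hu
  · rw [← Ideal.Quotient.eq_zero_iff_mem, map_mul]
    exact hux

theorem locMap_lift (hH : ∀ h ∈ H, eval p h = 0) {B : Type*} [CommRing B] [Algebra ℂ B]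
    (θ : MvPolynomial (Fin n) ℂ →ₐ[ℂ] B) (h0 : ∀ h ∈ H, θ h = 0)
    (hu : ∀ u, eval p u ≠ 0 → IsUnit (θ u)) :
    ∃ ψ : Localization.AtPrime (maxIdealAt H p) →ₐ[ℂ] B, ∀ x, ψ (locMap H p x) = θ x := by
  have hle : Ideal.span H ≤ RingHom.ker θ := Ideal.span_le.2 h0
  let θ' : (MvPolynomial (Fin n) ℂ ⧸ Ideal.span H) →ₐ[ℂ] B :=
    Ideal.Quotient.liftₐ (Ideal.span H) θ (fun a ha => hle ha)
  have hθ' : ∀ y : (maxIdealAt H p).primeCompl, IsUnit (θ' y) := by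
    rintro ⟨u, hu'⟩
    obtain ⟨u, rfl⟩ := Ideal.Quotient.mk_surjective u
    have : eval p u ≠ 0 := by
      rw [Ne, ← mk_mem_maxIdealAt hH]
      exact hu'
    exact hu u this
  refine ⟨IsLocalization.liftAlgHom (M := (maxIdealAt H p).primeCompl) hθ', ?_⟩
  intro x
  rw [locMap_apply, IsLocalization.liftAlgHom_apply]
  exact IsLocalization.lift_eq _ _

end

theorem loc_artinian {n : ℕ} {H : Set (MvPolynomial (Fin n) ℂ)} {p : Fin n → ℂ}
    {A : Type*} [CommRing A] [IsLocalRing A] [Algebra ℂ A] [IsNoetherianRing A]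
    (φ : MvPolynomial (Fin n) ℂ →ₐ[ℂ] A) (hφ0 : ∀ x ∈ Ideal.span H, φ x = 0)
    (hφu : ∀ u, IsUnit (φ u) ↔ eval p u ≠ 0)
    (hφs : ∀ a, ∃ x u, eval p u ≠ 0 ∧ φ u * a = φ x)
    (hart : ∀ P : Ideal (MvPolynomial (Fin n) ℂ), P.IsPrime → Ideal.span H ≤ P →
      P ≤ RingHom.ker (aeval p : MvPolynomial (Fin n) ℂ →ₐ[ℂ] ℂ) →
      P = RingHom.ker (aeval p : MvPolynomial (Fin n) ℂ →ₐ[ℂ] ℂ)) :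
    IsArtinianRing A := by
  rw [isArtinianRing_iff_krullDimLE_zero]
  refine Ring.KrullDimLE.mk₀ ?_
  intro Q hQ
  have hQc : Q.comap φ = RingHom.ker (aeval p : MvPolynomial (Fin n) ℂ →ₐ[ℂ] ℂ) := by
    apply hart
    · exact Ideal.comap_isPrime _ _
    · intro x hx
      rw [Ideal.mem_comap, hφ0 x hx]
      exact Q.zero_mem
    · intro x hx
      by_contra hne
      exact hQ.ne_top (Ideal.eq_top_of_isUnit_mem _ hx ((hφu x).2 hne))
  have : Q = IsLocalRing.maximalIdeal _ := by
    apply le_antisymm (IsLocalRing.le_maximalIdeal hQ.ne_top)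
    intro a ha
    obtain ⟨x, u, hu, hux⟩ := hφs a
    have hxQ : φ x ∈ Q := by
      rw [← Ideal.mem_comap, hQc]
      by_contra hne
      have h1 := (hφu x).2 hne
      rw [← hux] at h1
      exact ha (isUnit_of_mul_isUnit_right h1)
    rw [← hux] at hxQ
    rcases hQ.mem_or_mem hxQ with h | h
    · exact absurd (Ideal.eq_top_of_isUnit_mem _ h ((hφu u).2 hu)) hQ.ne_top
    · exact h
  rw [this]
  exact IsLocalRing.maximalIdeal.isMaximal _

theorem loc_nilpotent {A : Type*} [CommRing A] [IsLocalRing A] [IsArtinianRing A]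
    (a : A) (ha : ¬ IsUnit a) : IsNilpotent a := by
  obtain ⟨k, hk⟩ := IsArtinianRing.isNilpotent_jacobson_bot (R := A)
  rw [IsLocalRing.jacobson_eq_maximalIdeal _ bot_ne_top] at hk
  refine ⟨k, ?_⟩
  have h1 : a ^ k ∈ (IsLocalRing.maximalIdeal A) ^ k :=
    Ideal.pow_mem_pow ha k
  rw [hk] at h1
  exact h1

theorem loc_finite {n : ℕ} {p : Fin n → ℂ}
    {A : Type*} [CommRing A] [IsLocalRing A] [Algebra ℂ A] [IsArtinianRing A]
    (φ : MvPolynomial (Fin n) ℂ →ₐ[ℂ] A)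
    (hφu : ∀ u, IsUnit (φ u) ↔ eval p u ≠ 0)
    (hφs : ∀ a, ∃ x u, eval p u ≠ 0 ∧ φ u * a = φ x) :
    Module.Finite ℂ A := by
  have hinv : ∀ u, eval p u ≠ 0 → ∃ v, φ u * φ v = 1 := by
    intro u hu
    let w := 1 - C (eval p u)⁻¹ * u
    have hw : IsNilpotent (φ w) := by
      apply loc_nilpotent
      rw [hφu]
      simp [w, hu]
    obtain ⟨k, hk⟩ := hw
    have hgeom : (1 - w) * ∑ i ∈ Finset.range k, w ^ i = 1 - w ^ k :=
      mul_neg_geom_sum w k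
    refine ⟨C (eval p u)⁻¹ * ∑ i ∈ Finset.range k, w ^ i, ?_⟩
    have h1 := congrArg φ hgeom
    rw [map_sub, map_one, map_pow, hk, sub_zero] at h1
    rw [← h1, ← map_mul]
    congr 1
    simp only [w]
    ring
  have hsurj : Function.Surjective φ := by
    intro a
    obtain ⟨x, u, hu, hux⟩ := hφs a
    obtain ⟨v, hv⟩ := hinv u hu
    refine ⟨v * x, ?_⟩
    rw [map_mul, ← hux, ← mul_assoc, mul_comm (φ v), hv, one_mul]
  have : Algebra.FiniteType ℂ A :=
    Algebra.FiniteType.of_surjective φ hsurj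
  exact (Module.finite_iff_isArtinianRing ℂ _).2 inferInstance

theorem exists_minor {s n : ℕ} (M : Matrix (Fin s) (Fin n) ℂ) (h : M.rank = s) :
    ∃ col : Fin s → Fin n, (M.submatrix id col).det ≠ 0 := by
  obtain ⟨g, hg, -, hli⟩ := Submodule.exists_fun_fin_finrank_span_eq ℂ (Set.range M.col)
  have hr : s = Module.finrank ℂ (Submodule.span ℂ (Set.range M.col)) := by
    rw [← Matrix.rank_eq_finrank_span_cols, h]
  choose c hc using hg
  refine ⟨fun i => c (Fin.cast hr i), ?_⟩
  have h1 : LinearIndependent ℂ (M.submatrix id fun i => c (Fin.cast hr i)).col := by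
    have : (M.submatrix id fun i => c (Fin.cast hr i)).col = g ∘ Fin.cast hr := by
      funext i
      exact hc (Fin.cast hr i)
    rw [this]
    exact hli.comp _ (Fin.cast_injective hr)
  rw [Matrix.linearIndependent_cols_iff_isUnit, Matrix.isUnit_iff_isUnit_det] at h1
  exact h1.ne_zero

/-- Abstract comparison of two local algebras. -/
theorem finrank_lt_aux {A B : Type*} [CommRing A] [CommRing B] [IsLocalRing A] [Nontrivial B]
    [Algebra ℂ A] [Algebra ℂ B] [IsArtinianRing A] [Module.Finite ℂ A]
    {N : ℕ} {P : Fin N → ℂ} (φ : MvPolynomial (Fin N) ℂ →ₐ[ℂ] B)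
    (hφu : ∀ u, IsUnit (φ u) ↔ eval P u ≠ 0)
    (hφs : ∀ a, ∃ x u, eval P u ≠ 0 ∧ φ u * a = φ x)
    (ψ : A →ₐ[ℂ] B) (hX : ∀ i, ∃ a, ψ a = φ (X i)) (hne : ∃ a, a ≠ 0 ∧ ψ a = 0) :
    Module.finrank ℂ B < Module.finrank ℂ A := by
  have hr : ∀ x, ∃ a, ψ a = φ x := by
    intro x
    induction x using MvPolynomial.induction_on with
    | C z => exact ⟨algebraMap ℂ A z, by rw [AlgHom.commutes]; exact (φ.commutes z).symm⟩
    | add x y hx hy =>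
      obtain ⟨a, ha⟩ := hx
      obtain ⟨b, hb⟩ := hy
      exact ⟨a + b, by rw [map_add, map_add, ha, hb]⟩
    | mul_X x i hx =>
      obtain ⟨a, ha⟩ := hx
      obtain ⟨b, hb⟩ := hX i
      exact ⟨a * b, by rw [map_mul, map_mul, ha, hb]⟩
  have hsurj : Function.Surjective ψ := by
    intro b
    obtain ⟨x, u, hu, hux⟩ := hφs b
    obtain ⟨a, ha⟩ := hr x
    obtain ⟨c, hc⟩ := hr u
    have hcu : IsUnit c := by
      by_contra hcn
      have h1 := (loc_nilpotent c hcn).map ψ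
      rw [hc] at h1
      have h2 := (hφu u).2 hu
      obtain ⟨k, hk⟩ := h1
      have h3 := h2.pow k
      rw [hk] at h3
      exact not_isUnit_zero h3
    obtain ⟨d, hd⟩ := hcu.exists_left_inv
    refine ⟨d * a, ?_⟩
    rw [map_mul, ha, ← hux, ← hc, ← mul_assoc, ← map_mul, hd, map_one, one_mul]
  have h1 := LinearMap.finrank_range_add_finrank_ker ψ.toLinearMap
  have h2 : LinearMap.range ψ.toLinearMap = ⊤ := LinearMap.range_eq_top.2 hsurj
  rw [h2, finrank_top] at h1
  have h3 : 0 < Module.finrank ℂ (LinearMap.ker ψ.toLinearMap) := by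
    rw [Module.finrank_pos_iff_exists_ne_zero]
    obtain ⟨a, ha, ha'⟩ := hne
    exact ⟨⟨a, ha'⟩, fun h => ha (congrArg Subtype.val h)⟩
  omega

theorem cramer_aux {s : ℕ} {R B : Type*} [CommRing R] [CommRing B] (θ : R →+* B)
    (M : Matrix (Fin s) (Fin s) R) (v : Fin s → R) (α : Fin s → B)
    (h : ∀ j, (∑ i, α i * θ (M i j)) + θ (v j) = 0) :
    ∀ i, θ ((-(Matrix.vecMul v M.adjugate)) i) = θ M.det * α i := by
  intro i
  have h1 : Matrix.vecMul α (M.map θ) = fun j => - θ (v j) := by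
    funext j
    exact eq_neg_of_add_eq_zero_left (h j)
  have h2 := congrArg (fun x => Matrix.vecMul x (M.map θ).adjugate) h1
  simp only [Matrix.vecMul_vecMul, Matrix.mul_adjugate, Matrix.vecMul_smul,
    Matrix.vecMul_one] at h2
  have h3 := congrFun h2 i
  have h4 : (M.map θ).det = θ M.det := (RingHom.map_det θ M).symm
  have h5 : (M.map θ).adjugate = M.adjugate.map θ := (RingHom.map_adjugate θ M).symm
  rw [h4, h5] at h3
  rw [Pi.smul_apply, smul_eq_mul] at h3
  rw [h3]
  simp [Matrix.vecMul, dotProduct]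

theorem final_aux {n s : ℕ} (hs : s < n)
    (f : Fin n → MvPolynomial (Fin n) ℂ) (p : Fin n → ℂ)
    (hzero : ∀ i, eval p (f i) = 0)
    (hart : ∀ P : Ideal (MvPolynomial (Fin n) ℂ), P.IsPrime → Ideal.span (Set.range f) ≤ P →
      P ≤ RingHom.ker (aeval p : MvPolynomial (Fin n) ℂ →ₐ[ℂ] ℂ) →
      P = RingHom.ker (aeval p : MvPolynomial (Fin n) ℂ →ₐ[ℂ] ℂ))
    (hranks : jacRank (fun i : Fin s => f (Fin.castLE hs.le i)) p = s)
    (a : Fin s → ℂ) (G : Set (MvPolynomial (Fin (n + s)) ℂ))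
    (hGdef : G = (Set.range fun i : Fin n => embX s (f i)) ∪ Set.range (hPoly hs f))
    {A B : Type*} [CommRing A] [CommRing B] [IsLocalRing A] [Nontrivial B]
    [Algebra ℂ A] [Algebra ℂ B] [IsNoetherianRing A]
    (φA : MvPolynomial (Fin n) ℂ →ₐ[ℂ] A)
    (hA0 : ∀ x ∈ Ideal.span (Set.range f), φA x = 0)
    (hAu : ∀ u, IsUnit (φA u) ↔ eval p u ≠ 0)
    (hAs : ∀ a, ∃ x u, eval p u ≠ 0 ∧ φA u * a = φA x)
    (hAz : ∀ {x}, φA x = 0 → ∃ u, eval p u ≠ 0 ∧ u * x ∈ Ideal.span (Set.range f))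
    (hlift : ∀ θ : MvPolynomial (Fin n) ℂ →ₐ[ℂ] B, (∀ h ∈ Set.range f, θ h = 0) →
      (∀ u, eval p u ≠ 0 → IsUnit (θ u)) → ∃ ψ : A →ₐ[ℂ] B, ∀ x, ψ (φA x) = θ x)
    (φB : MvPolynomial (Fin (n + s)) ℂ →ₐ[ℂ] B)
    (hB0 : ∀ x ∈ Ideal.span G, φB x = 0)
    (hBu : ∀ u, IsUnit (φB u) ↔ eval (Fin.append p a) u ≠ 0)
    (hBs : ∀ b, ∃ x u, eval (Fin.append p a) u ≠ 0 ∧ φB u * b = φB x) :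
    Module.finrank ℂ B < Module.finrank ℂ A := by
  subst hGdef
  have hev : ∀ x, eval (Fin.append p a) (embX s x) = eval p x := by
    intro x
    rw [embX, eval_rename]
    congr 2
    funext i
    simp
  let θ : MvPolynomial (Fin n) ℂ →ₐ[ℂ] B :=
    φB.comp (rename (Fin.castAdd s))
  have hθ : ∀ x, θ x = φB (embX s x) := fun x => rfl
  have hθ0 : ∀ h ∈ Set.range f, θ h = 0 := by
    rintro _ ⟨i, rfl⟩
    rw [hθ]
    exact hB0 _ (Ideal.subset_span (Or.inl ⟨i, rfl⟩))
  have hθu : ∀ u, eval p u ≠ 0 → IsUnit (θ u) := by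
    intro u hu
    rw [hθ, hBu, hev]
    exact hu
  obtain ⟨ψ, hψ⟩ := hlift θ hθ0 hθu
  have hartA := loc_artinian (A := A)
    φA hA0 hAu
      hAs hart
  have hfinA := loc_finite (A := A)
    φA hAu hAs
  obtain ⟨col, hcol⟩ := exists_minor _ hranks
  let M : Matrix (Fin s) (Fin s) (MvPolynomial (Fin n) ℂ) :=
    Matrix.of fun i j => pderiv (col j) (f (Fin.castLE hs.le i))
  let v : Fin s → MvPolynomial (Fin n) ℂ := fun j => pderiv (col j) (f ⟨s, hs⟩)
  let δ := M.det
  have hδ : eval p δ ≠ 0 := by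
    have : eval p δ = ((Matrix.of fun (i : Fin s) (j : Fin n) =>
        eval p (pderiv j (f (Fin.castLE hs.le i)))).submatrix id col).det := by
      rw [RingHom.map_det]
      rfl
    rw [this]
    exact hcol
  let w : Fin s → MvPolynomial (Fin n) ℂ := -(Matrix.vecMul v M.adjugate)
  let α : Fin s → B :=
    fun i => φB (X (Fin.natAdd n i))
  have hh : ∀ j, (∑ i, α i * θ (pderiv j (f (Fin.castLE hs.le i)))) +
      θ (pderiv j (f ⟨s, hs⟩)) = 0 := by
    intro j
    have h1 : φB (hPoly hs f j) = 0 :=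
      hB0 _ (Ideal.subset_span (Or.inr ⟨j, rfl⟩))
    rw [hPoly, map_add, map_sum] at h1
    simp only [map_mul] at h1
    exact h1
  have hw : ∀ i, θ (w i) = θ δ * α i := by
    exact cramer_aux (B := B)
      θ.toRingHom M v α (fun j => hh (col j))
  refine finrank_lt_aux (A := A)
    (B := B)
    φB hBu hBs ψ ?_ ?_
  · intro i
    refine Fin.addCases (fun i => ?_) (fun i => ?_) i
    · exact ⟨φA (X i), by rw [hψ, hθ, embX, rename_X]⟩
    · obtain ⟨d, hd⟩ := ((hAu δ).2 hδ).exists_left_inv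
      refine ⟨d * φA (w i), ?_⟩
      rw [map_mul, hψ, hw, ← hψ, ← mul_assoc, ← map_mul, hd, map_one, one_mul]
  · by_contra hcon
    push Not at hcon
    let b : Fin n → MvPolynomial (Fin n) ℂ := fun i =>
      (∑ k : Fin s, if Fin.castLE hs.le k = i then w k else 0) + if i = ⟨s, hs⟩ then δ else 0
    have hbs : b ⟨s, hs⟩ = δ := by
      have : ∀ k : Fin s, Fin.castLE hs.le k ≠ ⟨s, hs⟩ := by
        intro k h
        have := congrArg Fin.val h
        simp at this
        omega
      simp [b, this]
    have hsum : ∀ j, ∑ i, b i * pderiv j (f i) =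
        (∑ k : Fin s, w k * pderiv j (f (Fin.castLE hs.le k))) +
          δ * pderiv j (f ⟨s, hs⟩) := by
      intro j
      simp only [b, add_mul, Finset.sum_add_distrib, Finset.sum_mul, ite_mul, zero_mul]
      rw [Finset.sum_comm]
      simp
    refine strict_core f p hzero hart ⟨s, hs⟩ b (by rw [hbs]; exact hδ) ?_
    intro j
    apply hAz
    by_contra hne
    apply hcon _ hne
    rw [hψ, hsum, map_add, map_sum]
    simp only [map_mul, hw]
    have := congrArg (fun x => θ δ * x) (hh j)
    simp only [mul_add, mul_zero, Finset.mul_sum] at this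
    simpa only [mul_assoc] using this

/-- Let `F = {f₁,…,fₙ} ⊂ ℂ[x₁,…,xₙ]` have an isolated singular zero
`p ∈ ℂⁿ` with `rank J(f₁,…,f_s)(p) = rank J(F)(p) = s`. With new variables
`α = (α₁,…,α_s)` and `h_j = α₁ ∂f₁/∂x_j + ⋯ + α_s ∂f_s/∂x_j + ∂f_{s+1}/∂x_j`, let
`G = {f₁,…,fₙ,h₁,…,hₙ} ⊂ ℂ[x,α]` and let `α̂` be the unique point with `G(p,α̂) = 0`.
Then the multiplicity of `(p,α̂)` as a zero of `G` is strictly smaller than the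
multiplicity of `p` as a zero of `F`. -/
theorem augmented_system_multiplicity_lt {n s : ℕ} (hs : s < n)
    (f : Fin n → MvPolynomial (Fin n) ℂ) (p : Fin n → ℂ)
    (hzero : ∀ i, eval p (f i) = 0)
    (hisolated : ∃ ε > 0, ∀ y : Fin n → ℂ, dist y p < ε → (∀ i, eval y (f i) = 0) → y = p)
    (hsingular : jacRank f p < n)
    (hranks : jacRank (fun i : Fin s => f (Fin.castLE hs.le i)) p = s)
    (hrank : jacRank f p = s)
    (a : Fin s → ℂ)
    (hG : (∀ i, eval (Fin.append p a) (embX s (f i)) = 0) ∧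
      (∀ j, eval (Fin.append p a) (hPoly hs f j) = 0))
    (huniq : ∀ a' : Fin s → ℂ,
      ((∀ i, eval (Fin.append p a') (embX s (f i)) = 0) ∧
        (∀ j, eval (Fin.append p a') (hPoly hs f j) = 0)) → a' = a) :
    zeroMultiplicity
        ((Set.range fun i : Fin n => embX s (f i)) ∪ Set.range (hPoly hs f))
        (Fin.append p a) <
      zeroMultiplicity (Set.range f) p := by
  have hart := isolated_art f p hisolated
  set G := (Set.range fun i : Fin n => embX s (f i)) ∪ Set.range (hPoly hs f) with hGdef
  have hF0 : ∀ h ∈ Set.range f, eval p h = 0 := by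
    rintro _ ⟨i, rfl⟩
    exact hzero i
  have hG0 : ∀ h ∈ G, eval (Fin.append p a) h = 0 := by
    rintro _ (⟨i, rfl⟩ | ⟨j, rfl⟩)
    · exact hG.1 i
    · exact hG.2 j
  have hpF := maxIdealAt_prime hF0
  have hpG := maxIdealAt_prime hG0
  rw [zeroMultiplicity, zeroMultiplicity, dif_pos hpF, dif_pos hpG]
  have hnoeth : IsNoetherianRing (Localization.AtPrime (maxIdealAt (Set.range f) p)) :=
    IsLocalization.isNoetherianRing (maxIdealAt (Set.range f) p).primeCompl _ inferInstance
  exact final_aux hs f p hzero hart hranks a G hGdef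
    (A := Localization.AtPrime (maxIdealAt (Set.range f) p))
    (B := Localization.AtPrime (maxIdealAt G (Fin.append p a)))
    (locMap (Set.range f) p) (fun x hx => locMap_mem hx) (locMap_isUnit hF0) (locMap_surj hF0)
    (locMap_eq_zero hF0) (fun θ h0 hu => locMap_lift
      (B := Localization.AtPrime (maxIdealAt G (Fin.append p a))) hF0 θ h0 hu)
    (locMap G (Fin.append p a)) (fun x hx => locMap_mem hx) (locMap_isUnit hG0) (locMap_surj hG0)
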